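/- arXiv:2106.05255 — 2 statements merged into one kernel-verified Lean document; each statement's English description precedes it below -/
import Mathlib

section
/- Let d, N ≥ 1 and let ρ̄ ∈ L¹(𝕋^d) be a probability density (ρ̄ ≥ 0, ∫_{𝕋^d} ρ̄ = 1). Let ψ ∈ L^∞(𝕋^d × 𝕋^d) satisfy ‖ψ‖_{L^∞} ≤ 1/(2e) and ∫_{𝕋^d} ψ(z,x) ρ̄(x) dx = 0 for every z ∈ 𝕋^d. Then, with ρ̄_N = ρ̄^{⊗N}, α = (e‖ψ‖_{L^∞})⁴ < 1 and β = (√(2e)‖ψ‖_{L^∞})⁴ < 1, one has ∫_{𝕋^{dN}} ρ̄_N exp( (1/N) Σ_{i,j=1}^N ψ(x₁,xᵢ) ψ(x₁,xⱼ) ) dX ≤ 2 ( 1 + 10α/(1−α)³ + β/(1−β) ). -/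
/-!
The double sum is the square of `∑ᵢ ψ(x₁, xᵢ)`. Conditionally on `x₁ = z` this is the constant
`ψ(z, z)` plus a sum of `N - 1` independent centred variables bounded by `S`, hence sub-Gaussian
with variance proxy `(N - 1) S²` by Hoeffding's lemma. The exponential of a square is linearized
by an independent standard Gaussian `g`, through `exp (l y²) = 𝔼 exp (√(2l) y g)`; exchanging the
two expectations leaves the moment generating function of the sum and then a Gaussian integral.
With `l = 1/N` this gives the bound `exp (S² / (1 - 2S²)) / √(1 - 2S²)` for every `N` and `z`, and
it is at most `2` as soon as `e S < 1`; the terms in `α` and `β` are nonnegative.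
-/

noncomputable section

open MeasureTheory Real Filter intervalIntegral
open scoped Classical

/-! ### Basic setup: the torus `𝕋^d` as `ℤ^d`-periodic functions on `ℝ^d` -/

/-- Euclidean space `ℝ^d`. -/
abbrev Euc (d : ℕ) := EuclideanSpace ℝ (Fin d)

/-- Interpret a plain function `Fin d → ℝ` as a point of `Euc d`. -/
def toE {d : ℕ} (f : Fin d → ℝ) : Euc d := (WithLp.equiv 2 (Fin d → ℝ)).symm f

/-- The unit cube `[0,1)^d`, a fundamental domain for the torus `𝕋^d = ℝ^d/ℤ^d`. -/
def cube (d : ℕ) : Set (Euc d) := {x | ∀ i, 0 ≤ x i ∧ x i < 1}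

/-- An integer vector in `ℝ^d`. -/
def intvec {d : ℕ} (k : Fin d → ℤ) : Euc d := toE (fun i => (k i : ℝ))

/-- `ℤ^d`-periodicity: a function on `ℝ^d` descending to the torus `𝕋^d`. -/
def ZPer {d : ℕ} {E : Type*} (f : Euc d → E) : Prop :=
  ∀ (x : Euc d) (k : Fin d → ℤ), f (x + intvec k) = f x

/-- Partial derivative `∂f/∂xᵢ`. -/
def pd {d : ℕ} (i : Fin d) (f : Euc d → ℝ) (x : Euc d) : ℝ :=
  fderiv ℝ f x (EuclideanSpace.single i 1)

/-- Laplacian on `ℝ^d`. -/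
def lap {d : ℕ} (f : Euc d → ℝ) (x : Euc d) : ℝ := ∑ i, pd i (pd i f) x

/-- Divergence of a vector field on `ℝ^d`. -/
def divg {d : ℕ} (v : Euc d → Euc d) (x : Euc d) : ℝ :=
  ∑ i, fderiv ℝ (fun y => v y i) x (EuclideanSpace.single i 1)

/-- The `C^k` norm of a function: sum of sup-norms of iterated derivatives up to order `k`. -/
def Cknorm {E F : Type*} [NormedAddCommGroup E] [NormedSpace ℝ E]
    [NormedAddCommGroup F] [NormedSpace ℝ F] (k : ℕ) (f : E → F) : ℝ :=
  ∑ ℓ ∈ Finset.range (k + 1), ⨆ x, ‖iteratedFDeriv ℝ ℓ f x‖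

/-! ### The periodic Biot–Savart kernel on `𝕋²` -/

/-- Rotation by 90 degrees: `x^⊥ = (-x₂, x₁)`. -/
def perp2 (x : Euc 2) : Euc 2 := toE ![-(x 1), x 0]

/-- The planar Biot–Savart kernel `(1/2π) x^⊥/|x|²` on `ℝ²`. -/
def bsRaw (x : Euc 2) : Euc 2 := ((2 * π)⁻¹ / ‖x‖ ^ 2) • perp2 x

/-- The representative of `x` in the fundamental domain `[-1/2,1/2)²`. -/
def torusRep2 (x : Euc 2) : Euc 2 := toE (fun i => Int.fract (x i + 1/2) - 1/2)

/-- The smooth periodization correction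
`γ(x) = lim_{R→∞} Σ_{0<|k|≤R} (1/2π)(x-k)^⊥/|x-k|²`. -/
def bsCorr (x : Euc 2) : Euc 2 :=
  limUnder atTop (fun R : ℕ =>
    ∑ k ∈ (Finset.Icc (fun _ => -(R : ℤ)) (fun _ => (R : ℤ))).filter
        (fun k : Fin 2 → ℤ => k ≠ 0 ∧ (k 0) ^ 2 + (k 1) ^ 2 ≤ (R : ℤ) ^ 2),
      bsRaw (x - intvec k))

/-- The periodic Biot–Savart kernel `K` on `𝕋²`, with the convention `K(0) = 0`. -/
def Kbs (x : Euc 2) : Euc 2 :=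
  if torusRep2 x = 0 then 0 else bsRaw (torusRep2 x) + bsCorr (torusRep2 x)

/-- The velocity field `u = K ∗ ω` on `𝕋²` obtained from a vorticity `ω`. -/
def convK (w : Euc 2 → ℝ) (x : Euc 2) : Euc 2 := ∫ y in cube 2, w y • Kbs (x - y)

/-! ### `𝕋⁴ = 𝕋² × 𝕋²` and the weighted tensorized Biot–Savart kernel -/

/-- First (positive) component `x₊` of a point of `𝕋⁴ = 𝕋² × 𝕋²`. -/
def pp (x : Euc 4) : Euc 2 := toE ![x 0, x 1]

/-- Second (negative) component `x₋` of a point of `𝕋⁴ = 𝕋² × 𝕋²`. -/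
def pm (x : Euc 4) : Euc 2 := toE ![x 2, x 3]

/-- Pairing `(a, b) ∈ 𝕋² × 𝕋² = 𝕋⁴`. -/
def pair2 (a b : Euc 2) : Euc 4 := toE ![a 0, a 1, b 0, b 1]

/-- The weighted tensorized Biot–Savart kernel `K̄(x,y)` with weights `α₊ = ap`, `α₋ = am`. -/
def Kbar (ap am : ℝ) (x y : Euc 4) : Euc 4 :=
  pair2 (ap • Kbs (pp x - pp y) - am • Kbs (pp x - pm y))
        (ap • Kbs (pm x - pp y) - am • Kbs (pm x - pm y))

/-- The weighted tensorized Biot–Savart operator `𝒦̄ w (x) = ∫_{𝕋⁴} K̄(x,y) w(y) dy`. -/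
def KbarOp (ap am : ℝ) (w : Euc 4 → ℝ) (x : Euc 4) : Euc 4 :=
  ∫ y in cube 4, w y • Kbar ap am x y

/-! ### Many-particle configuration spaces `𝕋^{dN}` -/

/-- Configuration space of `N` particles in `𝕋^d`. -/
abbrev Conf (N d : ℕ) := Fin N → Euc d

/-- Fundamental domain for `𝕋^{dN}`. -/
def cubeN (N d : ℕ) : Set (Conf N d) := {X | ∀ i, X i ∈ cube d}

/-- Periodicity in every particle variable. -/
def ZPerN {N d : ℕ} (f : Conf N d → ℝ) : Prop :=
  ∀ (X : Conf N d) (k : Fin N → Fin d → ℤ), f (fun i => X i + intvec (k i)) = f X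

/-- Partial derivative in the `j`-th coordinate of the `i`-th particle. -/
def pdP {N d : ℕ} (i : Fin N) (j : Fin d) (f : Conf N d → ℝ) (X : Conf N d) : ℝ :=
  fderiv ℝ f X (Pi.single i (EuclideanSpace.single j 1))

/-- `|∇_{xᵢ} f|²`. -/
def gradPsq {N d : ℕ} (i : Fin N) (f : Conf N d → ℝ) (X : Conf N d) : ℝ :=
  ∑ j, (pdP i j f X) ^ 2

/-- `Δ_{xᵢ} f`. -/
def lapP {N d : ℕ} (i : Fin N) (f : Conf N d → ℝ) (X : Conf N d) : ℝ :=
  ∑ j, pdP i j (pdP i j f) X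

/-- A probability density on `𝕋^{dN}`. -/
def IsProbDensityN {N d : ℕ} (ρ : Conf N d → ℝ) : Prop :=
  Measurable ρ ∧ (∀ X, 0 ≤ ρ X) ∧ ZPerN ρ ∧ (∫ X in cubeN N d, ρ X) = 1

/-- A symmetric (exchangeable) function on `𝕋^{dN}`. -/
def SymDensity {N d : ℕ} (ρ : Conf N d → ℝ) : Prop :=
  ∀ (σ : Equiv.Perm (Fin N)) (X : Conf N d), ρ (X ∘ σ) = ρ X

/-- Boltzmann entropy `∫ ρ log ρ`. -/
def entropyOf {N d : ℕ} (ρ : Conf N d → ℝ) : ℝ :=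
  ∫ X in cubeN N d, ρ X * Real.log (ρ X)

/-- Fisher information in the `i`-th variable, `∫ |∇_{xᵢ}ρ|²/ρ`. -/
def fisherI {N d : ℕ} (ρ : Conf N d → ℝ) (i : Fin N) : ℝ :=
  ∫ X in cubeN N d, gradPsq i ρ X / ρ X

/-- Rescaled relative entropy `H_N(ρ | ρ̄) = (1/N) ∫ ρ log(ρ/ρ̄)`. -/
def relEntropy (N d : ℕ) (ρ ρb : Conf N d → ℝ) : ℝ :=
  (1 / (N : ℝ)) * ∫ X in cubeN N d, ρ X * Real.log (ρ X / ρb X)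

/-- Tensor product density `w^{⊗N}`. -/
def tensorN {N d : ℕ} (w : Euc d → ℝ) : Conf N d → ℝ := fun X => ∏ i, w (X i)

/-- Gluing `(x¹,…,x^k)` with `(x^{k+1},…,x^N)`. -/
def glue {d k N : ℕ} (X : Fin k → Euc d) (Y : Fin (N - k) → Euc d) : Conf N d :=
  fun i => if h : (i : ℕ) < k then X ⟨i, h⟩ else Y ⟨(i : ℕ) - k, by have := i.2; omega⟩

/-- The `k`-particle marginal `ρ_{N,k}` of a density on `𝕋^{dN}`. -/
def marginal (d k N : ℕ) (ρ : Conf N d → ℝ) (X : Fin k → Euc d) : ℝ :=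
  ∫ Y in cubeN (N - k) d, ρ (glue X Y)

/-! ### The Liouville equation and entropy solutions -/

/-- Distributional (weak) solution of the Liouville equation
`∂_t ρ + (1/N) Σ_{i,j} b(xⁱ,xʲ)·∇_{xⁱ}ρ = ν Σ_i Δ_{xⁱ}ρ` on `𝕋^{dN}`,
for a divergence-free (in the first variable) interaction kernel `b`. -/
def LiouvilleWeak (d N : ℕ) (b : Euc d → Euc d → Euc d) (ν : ℝ)
    (ρ : ℝ → Conf N d → ℝ) : Prop :=
  ∀ φ : ℝ → Conf N d → ℝ,
    ContDiff ℝ (⊤ : ℕ∞) (fun p : ℝ × Conf N d => φ p.1 p.2) → (∀ t, ZPerN (φ t)) →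
    ∀ t, 0 ≤ t →
      ((∫ X in cubeN N d, ρ t X * φ t X) - ∫ X in cubeN N d, ρ 0 X * φ 0 X)
        = ∫ s in (0:ℝ)..t, ∫ X in cubeN N d,
            ρ s X * (deriv (fun r => φ r X) s
              + (1 / (N : ℝ)) * ∑ i, ∑ j, ∑ l, b (X i) (X j) l * pdP i l (φ s) X
              + ν * ∑ i, lapP i (φ s) X)

/-- Entropy solution of the Liouville equation: a weak solution by time-dependent
probability densities satisfying the entropy dissipation inequality. -/
def LiouvilleEntropySol (d N : ℕ) (b : Euc d → Euc d → Euc d) (ν : ℝ)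
    (ρ : ℝ → Conf N d → ℝ) : Prop :=
  (∀ t, 0 ≤ t → IsProbDensityN (ρ t)) ∧
  LiouvilleWeak d N b ν ρ ∧
  (∀ᵐ t : ℝ, 0 ≤ t →
    entropyOf (ρ t) + ν * ∑ i, ∫ s in (0:ℝ)..t, fisherI (ρ s) i ≤ entropyOf (ρ 0))

/-! ### Classical solutions of (tensorized) Navier–Stokes in vorticity form -/

/-- Classical solution (`C¹` in time with values in `C⁰`, `C⁰` in time with values in `C²`)
of 2D Navier–Stokes in vorticity form `∂_t ω + u·∇ω = νΔω`, `u = K ∗ ω`, on `𝕋²`,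
for times in `S`. -/
def IsClassicalNS2On (ν : ℝ) (S : Set ℝ) (w : ℝ → Euc 2 → ℝ) : Prop :=
  (∀ t ∈ S, ContDiff ℝ 2 (w t) ∧ ZPer (w t)) ∧
  ContinuousOn (fun p : ℝ × Euc 2 => w p.1 p.2) (S ×ˢ Set.univ) ∧
  (∀ t ∈ S, ∀ x, DifferentiableAt ℝ (fun s => w s x) t ∧
    deriv (fun s => w s x) t + ∑ i, convK (w t) x i * pd i (w t) x = ν * lap (w t) x)

/-- Classical solution of the tensorized Navier–Stokes equation
`∂_t ω̄ + ū·∇ω̄ = νΔω̄`, `ū = 𝒦̄ ω̄`, on `𝕋⁴`, for times in `S`. -/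
def IsClassicalTNSOn (ap am ν : ℝ) (S : Set ℝ) (w : ℝ → Euc 4 → ℝ) : Prop :=
  (∀ t ∈ S, ContDiff ℝ 2 (w t) ∧ ZPer (w t)) ∧
  ContinuousOn (fun p : ℝ × Euc 4 => w p.1 p.2) (S ×ˢ Set.univ) ∧
  (∀ t ∈ S, ∀ x, DifferentiableAt ℝ (fun s => w s x) t ∧
    deriv (fun s => w s x) t + ∑ i, KbarOp ap am (w t) x i * pd i (w t) x
      = ν * lap (w t) x)

/-! ### The heat semigroup on `𝕋^d` and mild solutions -/

/-- The Gaussian heat kernel `G_t(x) = (4πt)^{-d/2} e^{-|x|²/4t}` on `ℝ^d`. -/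
def gaussKernel (d : ℕ) (t : ℝ) (x : Euc d) : ℝ :=
  (4 * π * t) ^ (-(d : ℝ) / 2) * Real.exp (-‖x‖ ^ 2 / (4 * t))

/-- The periodized heat kernel on `𝕋^d`. -/
def heatKer (d : ℕ) (t : ℝ) (x : Euc d) : ℝ :=
  ∑' k : Fin d → ℤ, gaussKernel d t (x + intvec k)

/-- The heat semigroup `e^{tΔ}` on `𝕋^d`. -/
def heatOp (d : ℕ) (t : ℝ) (f : Euc d → ℝ) (x : Euc d) : ℝ :=
  if t ≤ 0 then f x else ∫ y in cube d, heatKer d t (x - y) * f y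

/-- Mild solution on `[0, T]` of `∂_t ω + ∇·(uω) = νΔω`, `u = K ω`, i.e.
`ω(t) = e^{νtΔ}ω₀ - ∫₀ᵗ e^{ν(t-s)Δ} ∇·((Kω)ω)(s) ds`. -/
def IsMildSol (d : ℕ) (ν : ℝ) (K : (Euc d → ℝ) → Euc d → Euc d)
    (ω0 : Euc d → ℝ) (T : ℝ) (ω : ℝ → Euc d → ℝ) : Prop :=
  ω 0 = ω0 ∧
  ∀ t, 0 < t → t ≤ T → ∀ x,
    ω t x = heatOp d (ν * t) ω0 x
      - ∫ s in (0:ℝ)..t, heatOp d (ν * (t - s)) (divg (fun z => ω s z • K (ω s) z)) x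

/-- Weak divergence-freeness of the velocity operator: `∇·(Kω) = 0` distributionally. -/
def WeakDivFree (d : ℕ) (K : (Euc d → ℝ) → Euc d → Euc d) : Prop :=
  ∀ ω : Euc d → ℝ, Continuous ω → ZPer ω →
    ∀ φ : Euc d → ℝ, ContDiff ℝ 1 φ → ZPer φ →
      (∫ x in cube d, ∑ i, pd i φ x * K ω x i) = 0

/-- `K` maps `C^ℓ(𝕋^d)` to `C^ℓ(𝕋^d)^d` with bound `M`. -/
def KBound (d ℓ : ℕ) (M : ℝ) (K : (Euc d → ℝ) → Euc d → Euc d) : Prop :=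
  ∀ ω : Euc d → ℝ, ContDiff ℝ ℓ ω → ZPer ω →
    ContDiff ℝ ℓ (K ω) ∧ ZPer (K ω) ∧ Cknorm ℓ (K ω) ≤ M * Cknorm ℓ ω

/-- `K` is `M`-Lipschitz in the `C^ℓ` norm (continuity of `K : C^ℓ → C^ℓ`). -/
def KLip (d ℓ : ℕ) (M : ℝ) (K : (Euc d → ℝ) → Euc d → Euc d) : Prop :=
  ∀ ω ω' : Euc d → ℝ, ContDiff ℝ ℓ ω → ZPer ω → ContDiff ℝ ℓ ω' → ZPer ω' →
    Cknorm ℓ (fun x => K ω x - K ω' x) ≤ M * Cknorm ℓ (fun x => ω x - ω' x)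

section SubGaussian

open ProbabilityTheory
open scoped NNReal ENNReal

variable {Ω : Type*} [MeasurableSpace Ω] {μ : Measure Ω} {X : Ω → ℝ} {c : ℝ≥0}

lemma gaussianPDFReal_mul_exp_quadratic {a : ℝ} (ha : a < 1) (b g : ℝ) :
    gaussianPDFReal 0 1 g * exp (b * g + a * g ^ 2 / 2) =
      exp (b ^ 2 / (2 * (1 - a))) / √(1 - a) *
        gaussianPDFReal (b / (1 - a)) (1 - a)⁻¹.toNNReal g := by
  have ha' : 0 < 1 - a := sub_pos.mpr ha
  have complete_square : -(g - 0) ^ 2 / (2 * 1) + (b * g + a * g ^ 2 / 2) =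
      b ^ 2 / (2 * (1 - a)) + -(g - b / (1 - a)) ^ 2 / (2 * (1 - a)⁻¹) := by
    field_simp
    ring
  have normalization : (√(2 * π * 1))⁻¹ = (√(1 - a))⁻¹ * (√(2 * π * (1 - a)⁻¹))⁻¹ := by
    rw [← mul_inv, ← sqrt_mul ha'.le, mul_left_comm, mul_inv_cancel₀ ha'.ne']
  simp only [gaussianPDFReal, coe_toNNReal _ (inv_nonneg.mpr ha'.le), NNReal.coe_one]
  rw [mul_assoc, ← exp_add, complete_square, exp_add, normalization]
  ring

lemma lintegral_exp_quadratic_gaussianReal {a : ℝ} (ha : a < 1) (b : ℝ) :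
    ∫⁻ g, ENNReal.ofReal (exp (b * g + a * g ^ 2 / 2)) ∂gaussianReal 0 1 =
      ENNReal.ofReal (exp (b ^ 2 / (2 * (1 - a))) / √(1 - a)) := by
  have hv : (1 - a)⁻¹.toNNReal ≠ 0 := by simpa using ha
  rw [gaussianReal_of_var_ne_zero _ one_ne_zero,
    lintegral_withDensity_eq_lintegral_mul _ (measurable_gaussianPDF 0 1) (by fun_prop)]
  simp only [Pi.mul_apply, gaussianPDF,
    ← ENNReal.ofReal_mul (gaussianPDFReal_nonneg 0 1 _), gaussianPDFReal_mul_exp_quadratic ha]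
  simp only [ENNReal.ofReal_mul (div_nonneg (exp_pos _).le (sqrt_nonneg _))]
  rw [lintegral_const_mul _ (by fun_prop), lintegral_gaussianPDFReal_eq_one _ hv, mul_one]

lemma lintegral_exp_mul_le_of_hasSubgaussianMGF (hX : HasSubgaussianMGF X c μ) (s : ℝ) :
    ∫⁻ ω, ENNReal.ofReal (exp (s * X ω)) ∂μ ≤ ENNReal.ofReal (exp (c * s ^ 2 / 2)) := by
  rw [← ofReal_integral_eq_lintegral_ofReal (hX.integrable_exp_mul s)
    (ae_of_all _ fun _ => (exp_pos _).le)]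
  exact ENNReal.ofReal_le_ofReal (hX.mgf_le s)

lemma lintegral_exp_mul_sq_le_of_hasSubgaussianMGF (hX : HasSubgaussianMGF X c μ) {l : ℝ}
    (hl : 0 ≤ l) (hlc : 2 * l * c < 1) (t : ℝ) :
    ∫⁻ ω, ENNReal.ofReal (exp (l * (t + X ω) ^ 2)) ∂μ ≤
      ENNReal.ofReal (exp (l * t ^ 2 / (1 - 2 * l * c)) / √(1 - 2 * l * c)) := by
  have : IsFiniteMeasure μ := by
    simpa [integrable_const_iff, isFiniteMeasure_iff] using hX.integrable_exp_mul 0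
  have hXm := hX.aemeasurable
  set s := √(2 * l)
  have hs_sq : s ^ 2 = 2 * l := sq_sqrt (by positivity)
  have linearize (y : ℝ) : ENNReal.ofReal (exp (l * y ^ 2)) =
      ∫⁻ g, ENNReal.ofReal (exp (s * y * g)) ∂gaussianReal 0 1 := by
    have h := lintegral_exp_quadratic_gaussianReal zero_lt_one (s * y)
    simp only [zero_mul, zero_div, add_zero, sub_zero, sqrt_one, div_one, mul_pow, hs_sq] at h
    rw [h]
    ring_nf
  calc ∫⁻ ω, ENNReal.ofReal (exp (l * (t + X ω) ^ 2)) ∂μ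
      = ∫⁻ g, ∫⁻ ω, ENNReal.ofReal (exp (s * (t + X ω) * g)) ∂μ ∂gaussianReal 0 1 := by
        simp only [linearize]
        exact lintegral_lintegral_swap (by fun_prop)
    _ = ∫⁻ g, ENNReal.ofReal (exp (s * t * g)) *
          ∫⁻ ω, ENNReal.ofReal (exp (s * g * X ω)) ∂μ ∂gaussianReal 0 1 := by
        refine lintegral_congr fun g => ?_
        rw [← lintegral_const_mul'' _ (by fun_prop)]
        refine lintegral_congr fun ω => ?_
        rw [← ENNReal.ofReal_mul (exp_pos _).le, ← exp_add]
        ring_nf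
    _ ≤ ∫⁻ g, ENNReal.ofReal (exp (s * t * g)) *
          ENNReal.ofReal (exp (c * (s * g) ^ 2 / 2)) ∂gaussianReal 0 1 := by
        gcongr with g
        exact lintegral_exp_mul_le_of_hasSubgaussianMGF hX (s * g)
    _ = ∫⁻ g, ENNReal.ofReal (exp (s * t * g + 2 * l * c * g ^ 2 / 2)) ∂gaussianReal 0 1 := by
        refine lintegral_congr fun g => ?_
        rw [← ENNReal.ofReal_mul (exp_pos _).le, ← exp_add, mul_pow, hs_sq]
        ring_nf
    _ = ENNReal.ofReal (exp (l * t ^ 2 / (1 - 2 * l * c)) / √(1 - 2 * l * c)) := by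
        rw [lintegral_exp_quadratic_gaussianReal hlc, mul_pow, hs_sq, mul_assoc,
          mul_div_mul_left _ _ two_ne_zero]

lemma hasSubgaussianMGF_of_abs_le [IsProbabilityMeasure μ] {S : ℝ≥0} (hXm : AEMeasurable X μ)
    (hXS : ∀ᵐ ω ∂μ, |X ω| ≤ S) (hX0 : μ[X] = 0) : HasSubgaussianMGF X (S ^ 2) μ := by
  convert! hasSubgaussianMGF_of_mem_Icc_of_integral_eq_zero (a := -S) (b := S) hXm
    (hXS.mono fun _ => abs_le.mp) hX0 using 1
  ext
  push_cast
  rw [norm_eq_abs, div_pow, sq_abs]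
  ring

end SubGaussian

section Product

open ProbabilityTheory
open scoped NNReal ENNReal

lemma hasSubgaussianMGF_sum_pi {ι : Type*} [Fintype ι] {E : ι → Type*}
    [∀ i, MeasurableSpace (E i)] {μ : ∀ i, Measure (E i)} [∀ i, IsProbabilityMeasure (μ i)]
    {φ : ∀ i, E i → ℝ} {c : ι → ℝ≥0} (hφ : ∀ i, HasSubgaussianMGF (φ i) (c i) (μ i)) :
    HasSubgaussianMGF (fun x : ∀ i, E i => ∑ i, φ i (x i)) (∑ i, c i) (Measure.pi μ) := by
  refine HasSubgaussianMGF.sum_of_iIndepFun (iIndepFun_pi fun i => (hφ i).aemeasurable)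
    fun i _ => HasSubgaussianMGF.of_map (measurable_pi_apply i).aemeasurable ?_
  exact (measurePreserving_eval μ i).map_eq ▸ hφ i

lemma lintegral_exp_mul_sq_sum_pi_le {ι E : Type*} [Fintype ι] [MeasurableSpace E]
    {μ : Measure E} [IsProbabilityMeasure μ] {φ : E → ℝ} (hφm : Measurable φ) {S : ℝ≥0}
    (hφS : ∀ x, |φ x| ≤ S) (hφ0 : ∫ x, φ x ∂μ = 0) {l : ℝ} (hl : 0 ≤ l)
    (hlS : 2 * l * (Fintype.card ι * S ^ 2) < 1) (t : ℝ) :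
    ∫⁻ y : ι → E, ENNReal.ofReal (exp (l * (t + ∑ i, φ (y i)) ^ 2)) ∂(Measure.pi fun _ => μ) ≤
      ENNReal.ofReal (exp (l * t ^ 2 / (1 - 2 * l * (Fintype.card ι * S ^ 2))) /
        √(1 - 2 * l * (Fintype.card ι * S ^ 2))) := by
  have hsum : HasSubgaussianMGF (fun y : ι → E => ∑ i, φ (y i)) (Fintype.card ι * S ^ 2)
      (Measure.pi fun _ => μ) := by
    simpa using hasSubgaussianMGF_sum_pi fun _ : ι =>
      hasSubgaussianMGF_of_abs_le hφm.aemeasurable (ae_of_all μ hφS) hφ0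
  exact_mod_cast lintegral_exp_mul_sq_le_of_hasSubgaussianMGF hsum hl (mod_cast hlS) t

lemma lintegral_pi_succAbove {n : ℕ} {E : Fin (n + 1) → Type*} [∀ i, MeasurableSpace (E i)]
    {μ : ∀ i, Measure (E i)} [∀ i, SigmaFinite (μ i)] (i₀ : Fin (n + 1))
    {F : (∀ i, E i) → ℝ≥0∞} (hF : Measurable F) :
    ∫⁻ x, F x ∂Measure.pi μ =
      ∫⁻ z, ∫⁻ y, F (i₀.insertNth z y) ∂(Measure.pi fun j => μ (i₀.succAbove j)) ∂μ i₀ := by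
  let e := (MeasurableEquiv.piFinSuccAbove E i₀).symm
  rw [← (measurePreserving_piFinSuccAbove μ i₀).symm.lintegral_comp_emb e.measurableEmbedding]
  exact lintegral_prod _ (hF.comp e.measurable).aemeasurable

lemma lintegral_exp_sq_sum_pi_le {E : Type*} [MeasurableSpace E] {μ : Measure E}
    [IsProbabilityMeasure μ] {N : ℕ} (i₀ : Fin N) {ψ : E → E → ℝ}
    (hψm : Measurable (Function.uncurry ψ)) {S : ℝ≥0} (hψS : ∀ z x, |ψ z x| ≤ S)
    (hψ0 : ∀ z, ∫ x, ψ z x ∂μ = 0) (hS : 2 * (S : ℝ) ^ 2 < 1) :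
    ∫⁻ x : Fin N → E, ENNReal.ofReal (exp (1 / N * (∑ i, ψ (x i₀) (x i)) ^ 2))
        ∂(Measure.pi fun _ => μ) ≤
      ENNReal.ofReal (exp (S ^ 2 / (1 - 2 * S ^ 2)) / √(1 - 2 * S ^ 2)) := by
  obtain ⟨n, rfl⟩ : ∃ n, N = n + 1 := Nat.exists_eq_add_one.mpr i₀.pos
  have (i : Fin (n + 1)) : Measurable fun x : Fin (n + 1) → E => ψ (x i₀) (x i) :=
    hψm.comp (f := fun x : Fin (n + 1) → E => (x i₀, x i)) (by fun_prop)
  set l : ℝ := 1 / (n + 1 : ℕ)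
  have hl0 : 0 ≤ l := by positivity
  have hl1 : l ≤ 1 := div_le_one_of_le₀ (by simp) (by positivity)
  have hln : l * n ≤ 1 := by
    rw [one_div_mul_eq_div]
    exact div_le_one_of_le₀ (by simp) (by positivity)
  have hlS : 2 * l * (n * S ^ 2) ≤ 2 * S ^ 2 := by nlinarith [sq_nonneg (S : ℝ)]
  have : 0 < 1 - 2 * (S : ℝ) ^ 2 := sub_pos.mpr hS
  have conditional_le (z : E) :
      ∫⁻ y : Fin n → E, ENNReal.ofReal (exp (l * (ψ z z + ∑ j, ψ z (y j)) ^ 2))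
          ∂(Measure.pi fun _ => μ) ≤
        ENNReal.ofReal (exp (S ^ 2 / (1 - 2 * S ^ 2)) / √(1 - 2 * S ^ 2)) := by
    have hzz : l * ψ z z ^ 2 ≤ S ^ 2 :=
      (mul_le_of_le_one_left (sq_nonneg _) hl1).trans (sq_le_sq.mpr (by simpa using hψS z z))
    refine (lintegral_exp_mul_sq_sum_pi_le hψm.of_uncurry_left (hψS z) (hψ0 z) hl0
      (by simpa using hlS.trans_lt hS) (ψ z z)).trans (ENNReal.ofReal_le_ofReal ?_)
    rw [Fintype.card_fin]
    gcongr
  rw [lintegral_pi_succAbove i₀ (by fun_prop)]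
  simp only [Fin.sum_univ_succAbove _ i₀, Fin.insertNth_apply_same, Fin.insertNth_apply_succAbove]
  exact (lintegral_mono conditional_le).trans (by simp)

lemma lintegral_fin_prod_eq_prod {n : ℕ} {E : Fin n → Type*} [∀ i, MeasurableSpace (E i)]
    {μ : ∀ i, Measure (E i)} [∀ i, SigmaFinite (μ i)] {f : ∀ i, E i → ℝ≥0∞}
    (hf : ∀ i, Measurable (f i)) :
    ∫⁻ x, ∏ i, f i (x i) ∂Measure.pi μ = ∏ i, ∫⁻ x, f i x ∂μ i := by
  induction n with
  | zero => simp
  | succ n ih =>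
    have htail : Measurable fun y : ∀ i : Fin n, E i.succ => ∏ i, f i.succ (y i) :=
      Finset.measurable_fun_prod _ fun i _ => (hf i.succ).comp (measurable_pi_apply i)
    rw [lintegral_pi_succAbove 0 (by fun_prop), Fin.prod_univ_succ, ← ih fun i => hf i.succ,
      ← lintegral_lintegral_mul (hf 0).aemeasurable htail.aemeasurable]
    simp only [Fin.prod_univ_succ]
    rfl

lemma lintegral_fintype_prod_eq_prod {ι : Type*} [Fintype ι] {E : ι → Type*}
    [∀ i, MeasurableSpace (E i)] {μ : ∀ i, Measure (E i)} [∀ i, SigmaFinite (μ i)]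
    {f : ∀ i, E i → ℝ≥0∞} (hf : ∀ i, Measurable (f i)) :
    ∫⁻ x, ∏ i, f i (x i) ∂Measure.pi μ = ∏ i, ∫⁻ x, f i x ∂μ i := by
  let e := (Fintype.equivFin ι).symm
  rw [← (measurePreserving_piCongrLeft μ e).lintegral_comp_emb
    (MeasurableEquiv.measurableEmbedding _)]
  simp_rw [← e.prod_comp, MeasurableEquiv.coe_piCongrLeft, Equiv.piCongrLeft_apply_apply]
  exact lintegral_fin_prod_eq_prod fun i => hf (e i)

lemma pi_withDensity {ι : Type*} [Fintype ι] {E : ι → Type*} [∀ i, MeasurableSpace (E i)]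
    {μ : ∀ i, Measure (E i)} [∀ i, SigmaFinite (μ i)] {f : ∀ i, E i → ℝ≥0∞}
    (hf : ∀ i, Measurable (f i)) [∀ i, SigmaFinite ((μ i).withDensity (f i))] :
    Measure.pi (fun i => (μ i).withDensity (f i)) =
      (Measure.pi μ).withDensity fun x => ∏ i, f i (x i) := by
  refine Measure.pi_eq fun s hs => ?_
  rw [withDensity_apply _ (.univ_pi hs), Measure.restrict_pi_pi, lintegral_fintype_prod_eq_prod hf]
  exact Finset.prod_congr rfl fun i _ => (withDensity_apply _ (hs i)).symm

end Product

section Constants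

lemma exp_div_sqrt_le_two {x : ℝ} (hx : x ≤ 1 / 7) :
    exp (x / (1 - 2 * x)) / √(1 - 2 * x) ≤ 2 := by
  have hsqrt : 4 / 5 ≤ √(1 - 2 * x) := le_sqrt_of_sq_le (by linarith)
  have hquot : x / (1 - 2 * x) ≤ 1 / 5 := by
    rw [div_le_iff₀ (by linarith)]
    linarith
  have hexp : exp (1 / 5) ≤ 5 / 4 := by
    have := one_sub_le_exp_neg (1 / 5)
    rw [exp_neg, le_inv_comm₀ (by norm_num) (exp_pos _)] at this
    linarith
  rw [div_le_iff₀ (by positivity)]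
  linarith [exp_le_exp.mpr hquot]

lemma sq_le_one_div_seven_of_exp_one_mul_lt_one {S : ℝ} (hS0 : 0 ≤ S) (hS : exp 1 * S < 1) :
    S ^ 2 ≤ 1 / 7 := by
  have he : 7 ≤ exp 1 ^ 2 := by nlinarith [exp_one_gt_d9]
  have hsq : (exp 1 * S) ^ 2 ≤ 1 := pow_le_one₀ (by positivity) hS.le
  nlinarith [sq_nonneg S]

lemma sqrt_two_mul_exp_one_mul_pow_four_lt_one {S : ℝ} (hS0 : 0 ≤ S) (hS : exp 1 * S < 1) :
    (√(2 * exp 1) * S) ^ 4 < 1 := by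
  have hsq : (√(2 * exp 1) * S) ^ 2 = 2 * (exp 1 * S) * S := by
    rw [mul_pow, sq_sqrt (by positivity)]
    ring
  have : (√(2 * exp 1) * S) ^ 2 < 1 := by
    rw [hsq]
    nlinarith [sq_le_one_div_seven_of_exp_one_mul_lt_one hS0 hS]
  rw [pow_mul _ 2 2]
  exact pow_lt_one₀ (by positivity) this two_ne_zero

end Constants

open scoped NNReal in
theorem jabin_wang_theorem3_general {E : Type*} [MeasurableSpace E] {μ : Measure E}
    [IsProbabilityMeasure μ] {N : ℕ} (i₀ : Fin N) {ψ : E → E → ℝ}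
    (hψm : Measurable (Function.uncurry ψ)) {S : ℝ} (hψS : ∀ z x, |ψ z x| ≤ S)
    (hψ0 : ∀ z, ∫ x, ψ z x ∂μ = 0) (hS : exp 1 * S < 1)
    {α β : ℝ} (hα : α = (exp 1 * S) ^ 4) (hβ : β = (√(2 * exp 1) * S) ^ 4) :
    α < 1 ∧ β < 1 ∧
      ∫ x : Fin N → E, exp (1 / N * ∑ i, ∑ j, ψ (x i₀) (x i) * ψ (x i₀) (x j))
          ∂(Measure.pi fun _ => μ) ≤
        2 * (1 + 10 * α / (1 - α) ^ 3 + β / (1 - β)) := by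
  obtain ⟨z⟩ : Nonempty E := μ.nonempty_of_neZero
  lift S to ℝ≥0 using (abs_nonneg _).trans (hψS z z)
  have hS7 := sq_le_one_div_seven_of_exp_one_mul_lt_one S.coe_nonneg hS
  have hα1 : α < 1 := hα ▸ pow_lt_one₀ (by positivity) hS four_ne_zero
  have hβ1 : β < 1 := hβ ▸ sqrt_two_mul_exp_one_mul_pow_four_lt_one S.coe_nonneg hS
  refine ⟨hα1, hβ1, ?_⟩
  simp only [← Finset.sum_mul_sum, ← sq]
  have hα_term : 0 ≤ 10 * α / (1 - α) ^ 3 :=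
    div_nonneg (by rw [hα]; positivity) (pow_nonneg (by linarith) 3)
  have hβ_term : 0 ≤ β / (1 - β) := div_nonneg (by rw [hβ]; positivity) (by linarith)
  calc ∫ x : Fin N → E, exp (1 / N * (∑ i, ψ (x i₀) (x i)) ^ 2) ∂(Measure.pi fun _ => μ)
      ≤ exp (S ^ 2 / (1 - 2 * S ^ 2)) / √(1 - 2 * S ^ 2) := by
        refine (le_norm_self _).trans (norm_integral_le_lintegral_norm _ |>.trans ?_)
        simp only [norm_eq_abs, abs_exp]
        exact ENNReal.toReal_le_of_le_ofReal (by positivity)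
          (lintegral_exp_sq_sum_pi_le i₀ hψm hψS hψ0 (by linarith))
    _ ≤ 2 := exp_div_sqrt_le_two hS7
    _ ≤ 2 * (1 + 10 * α / (1 - α) ^ 3 + β / (1 - β)) := by linarith

section Torus

lemma cubeN_eq_pi (N d : ℕ) : cubeN N d = Set.univ.pi fun _ => cube d := by
  ext
  simp [cubeN]

/-- The law on the unit cube, a fundamental domain of the torus, with density `ρ`. -/
def torusLaw {d : ℕ} (ρ : Euc d → ℝ) : Measure (Euc d) :=
  (volume.restrict (cube d)).withDensity fun x => ENNReal.ofReal (ρ x)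

variable {d : ℕ} {ρ : Euc d → ℝ}

lemma integral_torusLaw (hm : Measurable ρ) (hnn : ∀ x, 0 ≤ ρ x) (f : Euc d → ℝ) :
    ∫ x, f x ∂torusLaw ρ = ∫ x in cube d, f x * ρ x := by
  rw [torusLaw, integral_withDensity_eq_integral_toReal_smul hm.ennreal_ofReal
    (ae_of_all _ fun _ => ENNReal.ofReal_lt_top)]
  simp only [ENNReal.toReal_ofReal (hnn _), smul_eq_mul, mul_comm]

lemma isProbabilityMeasure_torusLaw (hnn : ∀ x, 0 ≤ ρ x) (hmass : ∫ x in cube d, ρ x = 1) :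
    IsProbabilityMeasure (torusLaw ρ) := by
  have hρ : IntegrableOn ρ (cube d) :=
    not_imp_comm.mp integral_undef (hmass ▸ one_ne_zero)
  constructor
  rw [torusLaw, withDensity_apply _ .univ, Measure.restrict_univ,
    ← ofReal_integral_eq_lintegral_ofReal hρ (ae_of_all _ hnn), hmass, ENNReal.ofReal_one]

lemma integral_pi_torusLaw (hm : Measurable ρ) (hnn : ∀ x, 0 ≤ ρ x) {N : ℕ}
    (F : Conf N d → ℝ) :
    ∫ X, F X ∂(Measure.pi fun _ => torusLaw ρ) = ∫ X in cubeN N d, tensorN ρ X * F X := by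
  simp only [torusLaw]
  rw [pi_withDensity fun _ => hm.ennreal_ofReal, ← Measure.restrict_pi_pi, ← cubeN_eq_pi,
    integral_withDensity_eq_integral_toReal_smul (by fun_prop)
      (ae_of_all _ fun _ => ENNReal.prod_lt_top fun _ _ => ENNReal.ofReal_lt_top)]
  simp only [ENNReal.toReal_prod, ENNReal.toReal_ofReal (hnn _), smul_eq_mul, tensorN]
  rfl

end Torus

/-- Theorem 3 of Jabin–Wang: large deviation estimate for
`(1/N) Σ_{i,j} ψ(x₁,xᵢ)ψ(x₁,xⱼ)` against a tensorized density, when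
`‖ψ‖_{L^∞} ≤ 1/(2e)` and `∫ ψ(z,x) ρ̄(x) dx = 0` for all `z`. Here `S` is the (essential)
sup-norm of `ψ`, and `α = (eS)⁴ < 1`, `β = (√(2e) S)⁴ < 1`. -/
theorem jabin_wang_theorem3
    (d N : ℕ) (hd : 1 ≤ d) (hN : 1 ≤ N)
    (ρb : Euc d → ℝ) (hm : Measurable ρb) (hnn : ∀ x, 0 ≤ ρb x) (hper : ZPer ρb)
    (hmass : (∫ x in cube d, ρb x) = 1)
    (ψ : Euc d → Euc d → ℝ) (hψm : Measurable (fun p : Euc d × Euc d => ψ p.1 p.2))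
    (S : ℝ) (hS0 : 0 ≤ S) (hψb : ∀ z x, |ψ z x| ≤ S)
    (hSsmall : S ≤ 1 / (2 * Real.exp 1))
    (hcancel : ∀ z, (∫ x in cube d, ψ z x * ρb x) = 0) :
    ∀ α β : ℝ, α = (Real.exp 1 * S) ^ 4 → β = (Real.sqrt (2 * Real.exp 1) * S) ^ 4 →
      α < 1 ∧ β < 1 ∧
      (∫ X in cubeN N d, tensorN ρb X *
          Real.exp ((1 / (N:ℝ)) * ∑ i, ∑ j,
            ψ (X ⟨0, hN⟩) (X i) * ψ (X ⟨0, hN⟩) (X j)))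
        ≤ 2 * (1 + 10 * α / (1 - α) ^ 3 + β / (1 - β)) := by
  intro α β hα hβ
  have hS : exp 1 * S < 1 := by
    rw [le_div_iff₀ (by positivity)] at hSsmall
    linarith
  have := isProbabilityMeasure_torusLaw hnn hmass
  rw [← integral_pi_torusLaw hm hnn]
  exact jabin_wang_theorem3_general ⟨0, hN⟩ hψm hψb
    (fun z => (integral_torusLaw hm hnn _).trans (hcancel z)) hS hα hβ
end
end

section
/- There is a universal constant C with the following property. Let d, N ≥ 1 and let ρ̄ ∈ L¹(𝕋^d) be a probability density. Let φ ∈ L^∞(𝕋^d × 𝕋^d) satisfy γ := C‖φ‖_{L^∞}² < 1 together with the two cancellation conditions ∫_{𝕋^d} φ(x,z) ρ̄(x) dx = 0 for all z and ∫_{𝕋^d} φ(x,z) ρ̄(z) dz = 0 for all x. Then, with ρ̄_N = ρ̄^{⊗N}, ∫_{𝕋^{dN}} ρ̄_N exp( (1/N) Σ_{i,j=1}^N φ(xᵢ,xⱼ) ) dX ≤ 3/(1−γ) < ∞. -/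
/-!
Let `X₁, …, X_N` be i.i.d. with law `μ = ρ̄ dx`. The diagonal of `(1/N) ∑ φ(Xᵢ, Xⱼ)` contributes at
most `S`; the off-diagonal part is a completely degenerate U-statistic.

*Decoupling.* A pair `i ≠ j` is separated, `i` into `I` and `j` into `J`, by a quarter of all
splittings `I ⊔ J` of the particles. By Jensen's inequality the exponential moment of the
off-diagonal part is at most the average over the splittings of
`𝔼 exp ((4/N) ∑_{i ∈ I, j ∈ J} φ(Xᵢ, Xⱼ))`.

*First group.* Given the particles of `J`, the function `f(x) = (4/N) ∑_{j ∈ J} φ(x, Xⱼ)` is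
centred. Since `exp u ≤ u + exp (u²)`, integrating out the particles of `I` gives at most
`(∫ exp (f²) dμ) ^ |I| ≤ ∫ exp (|I| f²) dμ`.

*Second group.* For fixed `x`, Hoeffding's lemma makes `f(x)` sub-Gaussian with parameter
`16 |J| S² / N²`. Writing `exp (|I| f(x)²)` as the exponential moment of a Gaussian multiple of
`f(x)` bounds its mean by `(1 - 32 |I| |J| S² / N²)^(-1/2)`, and `4 |I| |J| ≤ N²`.

Altogether the integral is at most `exp S / √(1 - 8 S²)`, so that `C = 8` works.
-/

noncomputable section

open MeasureTheory Real Filter intervalIntegral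
open scoped Classical

namespace JabinWang

open ProbabilityTheory
open scoped NNReal Finset

section Decoupling

variable {ι : Type*} [Fintype ι] [DecidableEq ι]

theorem four_mul_card_filter_mem_notMem {i j : ι} (hij : i ≠ j) :
    4 * #{s : Finset ι | i ∈ s ∧ j ∉ s} = 2 ^ Fintype.card ι := by
  have hIcc : ({s : Finset ι | i ∈ s ∧ j ∉ s} : Finset (Finset ι)) = Finset.Icc {i} {j}ᶜ := by
    ext s
    simp
  have hcard : 2 ≤ Fintype.card ι := by
    simpa [Finset.card_pair hij] using Finset.card_le_univ {i, j}
  rw [hIcc, Finset.card_Icc_finset (by simpa using hij.symm), Finset.card_compl,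
    Finset.card_singleton, Finset.card_singleton, Nat.sub_sub, show 4 = 2 ^ 2 from rfl, ← pow_add]
  congr 1
  omega

theorem four_nsmul_sum_sum_product_compl {E : Type*} [AddCommMonoid E] (a : ι × ι → E) :
    4 • ∑ s : Finset ι, ∑ p ∈ s ×ˢ sᶜ, a p
      = 2 ^ Fintype.card ι • ∑ p ∈ Finset.univ.offDiag, a p := by
  rw [Finset.sum_comm' (t' := Finset.univ.offDiag)
    (s' := fun p => {s : Finset ι | p.1 ∈ s ∧ p.2 ∉ s})]
  · rw [Finset.smul_sum, Finset.smul_sum]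
    refine Finset.sum_congr rfl fun p hp => ?_
    rw [Finset.sum_const, smul_smul, four_mul_card_filter_mem_notMem (Finset.mem_offDiag.1 hp).2.2]
  · rintro s ⟨i, j⟩
    simp only [Finset.mem_univ, Finset.mem_product, Finset.mem_compl, Finset.mem_filter,
      Finset.mem_offDiag, true_and]
    exact ⟨fun h => ⟨h, fun hij => h.2 (hij ▸ h.1)⟩, fun h => h.1⟩

theorem map_sum_offDiag_le_sum_finset {E : Type*} [AddCommGroup E] [Module ℝ E] {Φ : E → ℝ}
    (hΦ : ConvexOn ℝ Set.univ Φ) (a : ι × ι → E) :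
    Φ (∑ p ∈ Finset.univ.offDiag, a p)
      ≤ ∑ s : Finset ι, ((2 : ℝ) ^ Fintype.card ι)⁻¹ * Φ ((4 : ℝ) • ∑ p ∈ s ×ˢ sᶜ, a p) := by
  have haverage : ∑ p ∈ Finset.univ.offDiag, a p
      = ∑ s : Finset ι, ((2 : ℝ) ^ Fintype.card ι)⁻¹ • (4 : ℝ) • ∑ p ∈ s ×ˢ sᶜ, a p := by
    have h := four_nsmul_sum_sum_product_compl a
    rw [← Nat.cast_smul_eq_nsmul ℝ, ← Nat.cast_smul_eq_nsmul ℝ] at h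
    push_cast at h
    rw [← Finset.smul_sum, ← Finset.smul_sum, h, inv_smul_smul₀ (by positivity)]
  rw [haverage]
  exact hΦ.map_sum_le (fun _ _ => by positivity) (by simp) fun _ _ => Set.mem_univ _

end Decoupling

section SubGaussian

theorem integral_exp_mul_sq_gaussianReal {v : ℝ≥0} {t : ℝ} (ht : 2 * v * t < 1) :
    ∫ g, exp (t * g ^ 2) ∂gaussianReal 0 v = (√(1 - 2 * v * t))⁻¹ := by
  rcases eq_or_ne v 0 with rfl | hv
  · simp
  have : (0 : ℝ) < v := by positivity
  have hexponent (g : ℝ) : gaussianPDFReal 0 v g • exp (t * g ^ 2)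
      = (√(2 * π * v))⁻¹ * exp (-((1 - 2 * v * t) / (2 * v)) * g ^ 2) := by
    rw [gaussianPDFReal, smul_eq_mul, mul_assoc, ← Real.exp_add]
    congr 2
    field_simp
    ring
  simp_rw [integral_gaussianReal_eq_integral_smul hv, hexponent]
  rw [MeasureTheory.integral_const_mul, integral_gaussian, ← Real.sqrt_inv, ← Real.sqrt_inv,
    ← Real.sqrt_mul (by positivity)]
  congr 1
  field_simp

theorem lintegral_exp_mul_sq_gaussianReal {v : ℝ≥0} {t : ℝ} (ht : 2 * v * t < 1) :
    ∫⁻ g, ENNReal.ofReal (exp (t * g ^ 2)) ∂gaussianReal 0 v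
      = ENNReal.ofReal (√(1 - 2 * v * t))⁻¹ := by
  have hpos : 0 < (√(1 - 2 * v * t))⁻¹ := inv_pos.2 (Real.sqrt_pos.2 (by linarith))
  have hint : Integrable (fun g => exp (t * g ^ 2)) (gaussianReal 0 v) :=
    .of_integral_ne_zero (by rw [integral_exp_mul_sq_gaussianReal ht]; exact hpos.ne')
  rw [← integral_exp_mul_sq_gaussianReal ht,
    ofReal_integral_eq_lintegral_ofReal hint (ae_of_all _ fun _ => (exp_pos _).le)]

theorem lintegral_exp_mul_gaussianReal (m : ℝ) (v : ℝ≥0) (x : ℝ) :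
    ∫⁻ g, ENNReal.ofReal (exp (g * x)) ∂gaussianReal m v
      = ENNReal.ofReal (exp (m * x + v * x ^ 2 / 2)) := by
  rw [← congrFun (mgf_fun_id_gaussianReal (μ := m) (v := v)) x, mgf,
    ofReal_integral_eq_lintegral_ofReal (integrable_exp_mul_gaussianReal x)
      (ae_of_all _ fun _ => (exp_pos _).le)]
  simp only [mul_comm]

variable {Ω : Type*} [MeasurableSpace Ω] {P : Measure Ω}

-- With `g ∼ N(0, 1)`, `exp (t * x ^ 2)` is the mean of `exp (g * (√(2 * t) * x))`.
theorem integral_exp_mul_sq_le_of_hasSubgaussianMGF {X : Ω → ℝ} {c : ℝ≥0}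
    (hX : HasSubgaussianMGF X c P) {t : ℝ} (ht : 0 ≤ t) (hct : 2 * c * t < 1) :
    ∫ ω, exp (t * X ω ^ 2) ∂P ≤ (√(1 - 2 * c * t))⁻¹ := by
  have hfin : IsFiniteMeasure P :=
    (integrable_const_iff_isFiniteMeasure one_ne_zero).1 (by simpa using hX.integrable_exp_mul 0)
  have hXm : AEMeasurable X P := hX.aemeasurable
  have hlinearize (ω : Ω) : ENNReal.ofReal (exp (t * X ω ^ 2))
      = ∫⁻ g, ENNReal.ofReal (exp (g * (√(2 * t) * X ω))) ∂gaussianReal 0 1 := by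
    rw [lintegral_exp_mul_gaussianReal, zero_mul, zero_add, NNReal.coe_one, one_mul, mul_pow,
      Real.sq_sqrt (by positivity)]
    ring_nf
  have hmgf (g : ℝ) : ∫⁻ ω, ENNReal.ofReal (exp (g * (√(2 * t) * X ω))) ∂P
      ≤ ENNReal.ofReal (exp (c * t * g ^ 2)) := by
    simp only [← mul_assoc]
    rw [← ofReal_integral_eq_lintegral_ofReal (hX.integrable_exp_mul _)
      (ae_of_all _ fun _ => (exp_pos _).le)]
    refine ENNReal.ofReal_le_ofReal ((hX.mgf_le _).trans_eq ?_)
    rw [mul_pow, Real.sq_sqrt (by positivity)]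
    ring_nf
  rw [integral_eq_lintegral_of_nonneg_ae (ae_of_all _ fun _ => (exp_pos _).le) (by fun_prop)]
  refine ENNReal.toReal_le_of_le_ofReal (by positivity) ?_
  calc ∫⁻ ω, ENNReal.ofReal (exp (t * X ω ^ 2)) ∂P
      = ∫⁻ g, ∫⁻ ω, ENNReal.ofReal (exp (g * (√(2 * t) * X ω))) ∂P ∂gaussianReal 0 1 := by
        simp_rw [hlinearize]
        exact lintegral_lintegral_swap (by fun_prop)
    _ ≤ ∫⁻ g, ENNReal.ofReal (exp (c * t * g ^ 2)) ∂gaussianReal 0 1 := lintegral_mono hmgf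
    _ = ENNReal.ofReal (√(1 - 2 * c * t))⁻¹ := by
        rw [lintegral_exp_mul_sq_gaussianReal (by simpa [mul_assoc] using hct)]
        simp [mul_assoc]

theorem hasSubgaussianMGF_sum_eval {α κ : Type*} [MeasurableSpace α] [Fintype κ] {ν : Measure α}
    [IsProbabilityMeasure ν] {f : α → ℝ} (hf : AEMeasurable f ν) {S : ℝ} (hS : ∀ᵐ y ∂ν, |f y| ≤ S)
    (hmean : ∫ y, f y ∂ν = 0) :
    HasSubgaussianMGF (fun Y : κ → α => ∑ j, f (Y j)) (Fintype.card κ * ‖S‖₊ ^ 2)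
      (Measure.pi fun _ => ν) := by
  have hindep : iIndepFun (fun (j : κ) (Y : κ → α) => f (Y j)) (Measure.pi fun _ => ν) :=
    iIndepFun_pi fun _ => hf
  have hterm (j : κ) : HasSubgaussianMGF (fun Y : κ → α => f (Y j)) (‖S‖₊ ^ 2)
      (Measure.pi fun _ => ν) := by
    have hS2 : ‖S - -S‖₊ / 2 = ‖S‖₊ := by
      rw [sub_neg_eq_add, ← two_mul, nnnorm_mul, Real.nnnorm_ofNat]
      field_simp
    rw [← hS2]
    refine hasSubgaussianMGF_of_mem_Icc_of_integral_eq_zero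
      (hf.comp_quasiMeasurePreserving (Measure.quasiMeasurePreserving_eval _ j)) ?_ ?_
    · filter_upwards [(Measure.quasiMeasurePreserving_eval (fun _ : κ => ν) j).ae hS]
        with Y hY using abs_le.1 hY
    · exact (integral_comp_eval (μ := fun _ : κ => ν) hf.aestronglyMeasurable).trans hmean
  simpa using HasSubgaussianMGF.sum_of_iIndepFun hindep (s := Finset.univ) fun j _ => hterm j

end SubGaussian

theorem exp_le_add_exp_sq (x : ℝ) : exp x ≤ x + exp (x ^ 2) := by
  have hsq : 1 + x ^ 2 ≤ exp (x ^ 2) := by linarith [add_one_le_exp (x ^ 2)]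
  rcases le_total |x| 1 with hx | hx
  · linarith [(abs_le.1 (Real.abs_exp_sub_one_sub_id_le hx)).2]
  · rcases le_abs'.1 hx with hx | hx
    · have hexp : exp x ≤ 1 := exp_le_one_iff.2 (by linarith)
      nlinarith
    · have hexp : exp x ≤ exp (x ^ 2) := exp_le_exp.2 (by nlinarith)
      linarith

section SingleParticle

variable {α : Type*} [MeasurableSpace α] {μ : Measure α}

theorem integrable_exp_of_abs_le [IsFiniteMeasure μ] {f : α → ℝ} (hf : AEMeasurable f μ) {K : ℝ}
    (hK : ∀ᵐ x ∂μ, |f x| ≤ K) : Integrable (fun x => exp (f x)) μ := by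
  refine .of_bound (C := exp K) (by fun_prop) ?_
  filter_upwards [hK] with x hx
  rw [Real.norm_eq_abs, Real.abs_exp]
  exact exp_le_exp.2 (le_of_abs_le hx)

theorem integral_exp_le_integral_exp_sq {f : α → ℝ} (hf : Integrable f μ)
    (hsq : Integrable (fun x => exp (f x ^ 2)) μ) (hmean : ∫ x, f x ∂μ = 0) :
    ∫ x, exp (f x) ∂μ ≤ ∫ x, exp (f x ^ 2) ∂μ :=
  calc ∫ x, exp (f x) ∂μ ≤ ∫ x, (f x + exp (f x ^ 2)) ∂μ :=
        integral_mono_of_nonneg (ae_of_all _ fun _ => (exp_pos _).le) (hf.add hsq)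
          (ae_of_all _ fun x => exp_le_add_exp_sq (f x))
    _ = ∫ x, exp (f x ^ 2) ∂μ := by rw [integral_add hf hsq, hmean, zero_add]

theorem integral_exp_sum_le_integral_exp_card_mul_sq {ι : Type*} [Fintype ι]
    [IsProbabilityMeasure μ] {f : α → ℝ} (hf : AEMeasurable f μ) {K : ℝ} (hK : ∀ᵐ x ∂μ, |f x| ≤ K)
    (hmean : ∫ x, f x ∂μ = 0) :
    ∫ X : ι → α, exp (∑ i, f (X i)) ∂(Measure.pi fun _ => μ)
      ≤ ∫ x, exp (Fintype.card ι * f x ^ 2) ∂μ := by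
  have hint (n : ℕ) : Integrable (fun x => exp (n * f x ^ 2)) μ := by
    refine integrable_exp_of_abs_le (K := n * K ^ 2) (by fun_prop) ?_
    filter_upwards [hK] with x hx
    rw [abs_of_nonneg (by positivity), ← sq_abs]
    gcongr
  have hsq : Integrable (fun x => exp (f x ^ 2)) μ := by simpa using hint 1
  simp_rw [Real.exp_sum]
  rw [integral_fintype_prod_eq_pow fun x => exp (f x)]
  calc (∫ x, exp (f x) ∂μ) ^ Fintype.card ι
      ≤ (∫ x, exp (f x ^ 2) ∂μ) ^ Fintype.card ι := by
        refine pow_le_pow_left₀ (integral_nonneg fun _ => (exp_pos _).le) ?_ _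
        exact integral_exp_le_integral_exp_sq (.of_bound hf.aestronglyMeasurable K hK) hsq hmean
    _ ≤ ∫ x, exp (f x ^ 2) ^ Fintype.card ι ∂μ :=
        (convexOn_pow _).map_integral_le (continuous_pow _).continuousOn isClosed_Ici
          (ae_of_all _ fun _ => (exp_pos _).le) hsq
          (by simpa only [Function.comp_def, ← Real.exp_nat_mul] using hint (Fintype.card ι))
    _ = ∫ x, exp (Fintype.card ι * f x ^ 2) ∂μ := by simp_rw [← Real.exp_nat_mul]

end SingleParticle

/-- A bounded kernel which is completely degenerate, in the sense of U-statistics: it is centred in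
each variable when the other one is fixed. `S` is a bound for `φ`, not its exact supremum. -/
structure IsDegenerateKernel {α β : Type*} [MeasurableSpace α] [MeasurableSpace β]
    (φ : α → β → ℝ) (μ : Measure α) (ν : Measure β) (S : ℝ) : Prop where
  measurable : Measurable fun p : α × β => φ p.1 p.2
  abs_le : ∀ x y, |φ x y| ≤ S
  integral_left : ∀ y, ∫ x, φ x y ∂μ = 0
  integral_right : ∀ x, ∫ y, φ x y ∂ν = 0

namespace IsDegenerateKernel

variable {α β : Type*} [MeasurableSpace α] [MeasurableSpace β] {φ : α → β → ℝ} {μ : Measure α}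
  {ν : Measure β} {S : ℝ}

theorem measurable_comp (h : IsDegenerateKernel φ μ ν S) {Ω : Type*} [MeasurableSpace Ω] {f : Ω → α}
    {g : Ω → β} (hf : Measurable f) (hg : Measurable g) : Measurable fun ω => φ (f ω) (g ω) :=
  h.measurable.comp (hf.prodMk hg)

theorem measurable_left (h : IsDegenerateKernel φ μ ν S) (y : β) : Measurable fun x => φ x y :=
  h.measurable_comp measurable_id measurable_const

theorem measurable_right (h : IsDegenerateKernel φ μ ν S) (x : α) : Measurable (φ x) :=
  h.measurable_comp measurable_const measurable_id

theorem const_mul (h : IsDegenerateKernel φ μ ν S) (c : ℝ) :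
    IsDegenerateKernel (fun x y => c * φ x y) μ ν (|c| * S) where
  measurable := h.measurable.const_mul c
  abs_le x y := by
    rw [abs_mul]
    exact mul_le_mul_of_nonneg_left (h.abs_le x y) (abs_nonneg c)
  integral_left y := by rw [MeasureTheory.integral_const_mul, h.integral_left, mul_zero]
  integral_right x := by rw [MeasureTheory.integral_const_mul, h.integral_right, mul_zero]

theorem bound_nonneg (h : IsDegenerateKernel φ μ ν S) [Nonempty α] [Nonempty β] : 0 ≤ S :=
  (abs_nonneg _).trans (h.abs_le (Classical.arbitrary α) (Classical.arbitrary β))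

variable {ι κ : Type*} [Fintype κ]

theorem sum_right (h : IsDegenerateKernel φ μ ν S) [IsFiniteMeasure μ] [IsProbabilityMeasure ν] :
    IsDegenerateKernel (fun x (Y : κ → β) => ∑ j, φ x (Y j)) μ (Measure.pi fun _ => ν)
      (Fintype.card κ * S) where
  measurable := Finset.measurable_sum _ fun j _ => h.measurable_comp
    measurable_fst ((measurable_pi_apply j).comp measurable_snd)
  abs_le x Y :=
    calc |∑ j, φ x (Y j)| ≤ ∑ j, |φ x (Y j)| := Finset.abs_sum_le_sum_abs _ _
      _ ≤ ∑ _j : κ, S := Finset.sum_le_sum fun j _ => h.abs_le x _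
      _ = Fintype.card κ * S := by simp
  integral_left Y := by
    rw [MeasureTheory.integral_finsetSum]
    · simp [h.integral_left]
    · exact fun j _ => .of_bound (h.measurable_left _).aestronglyMeasurable S
        (ae_of_all _ fun x => h.abs_le x _)
  integral_right x := by
    have heval (j : κ) : ∫ Y : κ → β, φ x (Y j) ∂(Measure.pi fun _ => ν) = 0 :=
      (integral_comp_eval (μ := fun _ : κ => ν)
        (h.measurable_right x).aestronglyMeasurable).trans (h.integral_right x)
    rw [MeasureTheory.integral_finsetSum]
    · exact Finset.sum_eq_zero fun j _ => heval j
    · exact fun j _ => .of_bound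
        ((h.measurable_right x).comp (measurable_pi_apply j)).aestronglyMeasurable S
        (ae_of_all _ fun Y => h.abs_le x _)

variable [IsProbabilityMeasure ν]

theorem integral_exp_mul_sq_sum_le (h : IsDegenerateKernel φ μ ν S) (x : α) {t : ℝ} (ht : 0 ≤ t)
    (htS : 2 * (Fintype.card κ * S ^ 2) * t < 1) :
    ∫ Y : κ → β, exp (t * (∑ j, φ x (Y j)) ^ 2) ∂(Measure.pi fun _ => ν)
      ≤ (√(1 - 2 * (Fintype.card κ * S ^ 2) * t))⁻¹ := by
  have hX := hasSubgaussianMGF_sum_eval (κ := κ) (h.measurable_right x).aemeasurable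
    (ae_of_all _ (h.abs_le x)) (h.integral_right x)
  have hc : ((Fintype.card κ * ‖S‖₊ ^ 2 : ℝ≥0) : ℝ) = Fintype.card κ * S ^ 2 := by simp
  simpa only [hc] using integral_exp_mul_sq_le_of_hasSubgaussianMGF hX ht (by rwa [hc])

variable [IsProbabilityMeasure μ] [Fintype ι]

theorem integrable_exp_sum (h : IsDegenerateKernel φ μ ν S) :
    Integrable (fun Z : (ι → α) × β => exp (∑ i, φ (Z.1 i) Z.2))
      ((Measure.pi fun _ => μ).prod ν) := by
  have hmeas (i : ι) : Measurable fun Z : (ι → α) × β => φ (Z.1 i) Z.2 :=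
    h.measurable_comp ((measurable_pi_apply i).comp measurable_fst) measurable_snd
  refine integrable_exp_of_abs_le (K := ∑ _i : ι, S)
    (Finset.measurable_sum _ fun i _ => hmeas i).aemeasurable (ae_of_all _ fun Z => ?_)
  exact (Finset.abs_sum_le_sum_abs _ _).trans (Finset.sum_le_sum fun i _ => h.abs_le _ _)

theorem integrable_exp_mul_sq (h : IsDegenerateKernel φ μ ν S) (t : ℝ) :
    Integrable (fun p : α × β => exp (t * φ p.1 p.2 ^ 2)) (μ.prod ν) := by
  refine integrable_exp_of_abs_le (K := |t| * S ^ 2)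
    ((h.measurable.pow_const 2).const_mul t).aemeasurable (ae_of_all _ fun p => ?_)
  rw [abs_mul, abs_pow]
  gcongr
  exact h.abs_le _ _

theorem integral_exp_sum_sum_le (h : IsDegenerateKernel φ μ ν S)
    (hS : 2 * (Fintype.card ι * Fintype.card κ) * S ^ 2 < 1) :
    ∫ Z : (ι → α) × (κ → β), exp (∑ i, ∑ j, φ (Z.1 i) (Z.2 j))
        ∂((Measure.pi fun _ => μ).prod (Measure.pi fun _ => ν))
      ≤ (√(1 - 2 * (Fintype.card ι * Fintype.card κ) * S ^ 2))⁻¹ := by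
  have hrearrange : 2 * (Fintype.card ι * Fintype.card κ) * S ^ 2
      = 2 * (Fintype.card κ * S ^ 2) * Fintype.card ι := by ring
  rw [hrearrange] at hS ⊢
  have hF := h.sum_right (κ := κ)
  have hint := hF.integrable_exp_sum (ι := ι)
  have hint_sq := hF.integrable_exp_mul_sq (Fintype.card ι)
  rw [integral_prod_symm _ hint]
  calc ∫ Y : κ → β, ∫ X : ι → α, exp (∑ i, ∑ j, φ (X i) (Y j))
        ∂(Measure.pi fun _ => μ) ∂(Measure.pi fun _ => ν)
      ≤ ∫ Y : κ → β, ∫ x, exp (Fintype.card ι * (∑ j, φ x (Y j)) ^ 2) ∂μ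
          ∂(Measure.pi fun _ => ν) :=
        integral_mono hint.integral_prod_right hint_sq.integral_prod_right fun Y =>
          integral_exp_sum_le_integral_exp_card_mul_sq (hF.measurable_left Y).aemeasurable
            (ae_of_all _ fun x => hF.abs_le x Y) (hF.integral_left Y)
    _ = ∫ x, ∫ Y : κ → β, exp (Fintype.card ι * (∑ j, φ x (Y j)) ^ 2)
          ∂(Measure.pi fun _ => ν) ∂μ := (integral_integral_swap hint_sq).symm
    _ ≤ ∫ _, (√(1 - 2 * (Fintype.card κ * S ^ 2) * Fintype.card ι))⁻¹ ∂μ :=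
        integral_mono hint_sq.integral_prod_left (integrable_const _) fun x =>
          h.integral_exp_mul_sq_sum_le x (Nat.cast_nonneg _) hS
    _ = (√(1 - 2 * (Fintype.card κ * S ^ 2) * Fintype.card ι))⁻¹ := by simp

end IsDegenerateKernel

namespace IsDegenerateKernel

variable {α : Type*} [MeasurableSpace α] {φ : α → α → ℝ} {μ : Measure α} [IsProbabilityMeasure μ]
  {S : ℝ} {ι : Type*} [Fintype ι]

theorem integrable_exp_sum_prod (h : IsDegenerateKernel φ μ μ S) (t : Finset (ι × ι)) :
    Integrable (fun X : ι → α => exp (∑ p ∈ t, φ (X p.1) (X p.2))) (Measure.pi fun _ => μ) := by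
  have hmeas (p : ι × ι) : Measurable fun X : ι → α => φ (X p.1) (X p.2) :=
    h.measurable_comp (measurable_pi_apply p.1) (measurable_pi_apply p.2)
  refine integrable_exp_of_abs_le (K := ∑ _p ∈ t, S)
    (Finset.measurable_sum _ fun p _ => hmeas p).aemeasurable (ae_of_all _ fun X => ?_)
  exact (Finset.abs_sum_le_sum_abs _ _).trans (Finset.sum_le_sum fun p _ => h.abs_le _ _)

theorem integral_exp_sum_product_compl_le [DecidableEq ι] (h : IsDegenerateKernel φ μ μ S)
    (s : Finset ι) (hS : 2 * (#s * #sᶜ) * S ^ 2 < 1) :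
    ∫ X : ι → α, exp (∑ p ∈ s ×ˢ sᶜ, φ (X p.1) (X p.2)) ∂(Measure.pi fun _ => μ)
      ≤ (√(1 - 2 * (#s * #sᶜ) * S ^ 2))⁻¹ := by
  have hcard : Fintype.card {i // i ∈ s} = #s := Fintype.card_coe s
  have hcard_compl : Fintype.card {i // i ∉ s} = #sᶜ := by
    rw [Finset.card_compl, Fintype.card_subtype_compl, hcard]
  have hsplit (X : ι → α) : ∑ p ∈ s ×ˢ sᶜ, φ (X p.1) (X p.2)
      = ∑ i : {i // i ∈ s}, ∑ j : {j // j ∉ s}, φ (X i) (X j) := by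
    rw [Finset.sum_product, Finset.sum_subtype s fun _ => Iff.rfl]
    exact Finset.sum_congr rfl fun i _ => Finset.sum_subtype _ (fun _ => Finset.mem_compl) _
  have hbipartite := h.integral_exp_sum_sum_le (ι := {i // i ∈ s}) (κ := {j // j ∉ s})
    (by rwa [hcard, hcard_compl])
  rw [hcard, hcard_compl] at hbipartite
  refine le_of_eq_of_le ?_ hbipartite
  simp_rw [hsplit]
  convert (measurePreserving_piEquivPiSubtypeProd (fun _ : ι => μ) (· ∈ s)).integral_comp'
    fun Z => exp (∑ i, ∑ j, φ (Z.1 i) (Z.2 j)) <;> rfl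

theorem integral_exp_sum_offDiag_le (h : IsDegenerateKernel φ μ μ S)
    (hS : 8 * (Fintype.card ι * S) ^ 2 < 1) :
    ∫ X : ι → α, exp (∑ p ∈ Finset.univ.offDiag, φ (X p.1) (X p.2)) ∂(Measure.pi fun _ => μ)
      ≤ (√(1 - 8 * (Fintype.card ι * S) ^ 2))⁻¹ := by
  have h4 := h.const_mul 4
  have hgroup_sizes (s : Finset ι) :
      2 * (#s * #sᶜ) * (|4| * S) ^ 2 ≤ 8 * (Fintype.card ι * S) ^ 2 := by
    have hcard : (#s : ℝ) + #sᶜ = Fintype.card ι := mod_cast Finset.card_add_card_compl s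
    have hamgm : 4 * (#s : ℝ) * #sᶜ ≤ Fintype.card ι ^ 2 := hcard ▸ four_mul_le_sq_add _ _
    rw [abs_of_pos (by norm_num : (0 : ℝ) < 4)]
    nlinarith [mul_le_mul_of_nonneg_right hamgm (sq_nonneg S)]
  have hdecoupled (s : Finset ι) :
      ∫ X : ι → α, exp (∑ p ∈ s ×ˢ sᶜ, 4 * φ (X p.1) (X p.2)) ∂(Measure.pi fun _ => μ)
        ≤ (√(1 - 8 * (Fintype.card ι * S) ^ 2))⁻¹ := by
    refine (h4.integral_exp_sum_product_compl_le s ((hgroup_sizes s).trans_lt hS)).trans ?_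
    exact inv_anti₀ (Real.sqrt_pos.2 (by linarith))
      (Real.sqrt_le_sqrt (by linarith [hgroup_sizes s]))
  have hint (s : Finset ι) := (h4.integrable_exp_sum_prod (s ×ˢ sᶜ)).const_mul
    ((2 : ℝ) ^ Fintype.card ι)⁻¹
  calc ∫ X : ι → α, exp (∑ p ∈ Finset.univ.offDiag, φ (X p.1) (X p.2)) ∂(Measure.pi fun _ => μ)
      ≤ ∫ X : ι → α, ∑ s : Finset ι, ((2 : ℝ) ^ Fintype.card ι)⁻¹ *
          exp (∑ p ∈ s ×ˢ sᶜ, 4 * φ (X p.1) (X p.2)) ∂(Measure.pi fun _ => μ) := by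
        refine integral_mono (h.integrable_exp_sum_prod _)
          (integrable_finsetSum _ fun s _ => hint s) fun X => ?_
        simpa only [smul_eq_mul, Finset.mul_sum] using
          map_sum_offDiag_le_sum_finset convexOn_exp fun p => φ (X p.1) (X p.2)
    _ = ∑ s : Finset ι, ((2 : ℝ) ^ Fintype.card ι)⁻¹ *
          ∫ X : ι → α, exp (∑ p ∈ s ×ˢ sᶜ, 4 * φ (X p.1) (X p.2)) ∂(Measure.pi fun _ => μ) := by
        rw [MeasureTheory.integral_finsetSum _ fun s _ => hint s]
        simp_rw [MeasureTheory.integral_const_mul]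
    _ ≤ ∑ _s : Finset ι, ((2 : ℝ) ^ Fintype.card ι)⁻¹ *
          (√(1 - 8 * (Fintype.card ι * S) ^ 2))⁻¹ := by
        gcongr with s
        exact hdecoupled s
    _ = (√(1 - 8 * (Fintype.card ι * S) ^ 2))⁻¹ := by simp

theorem mean_interaction_le_add_sum_offDiag (h : IsDegenerateKernel φ μ μ S) (X : ι → α) :
    1 / Fintype.card ι * ∑ i, ∑ j, φ (X i) (X j)
      ≤ S + ∑ p ∈ Finset.univ.offDiag, 1 / Fintype.card ι * φ (X p.1) (X p.2) := by
  have : Nonempty α := μ.nonempty_of_neZero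
  have hdiag : 1 / Fintype.card ι * ∑ i, φ (X i) (X i) ≤ S :=
    calc 1 / Fintype.card ι * ∑ i, φ (X i) (X i)
        ≤ 1 / Fintype.card ι * ∑ _i : ι, S := by
          gcongr with i
          exact le_of_abs_le (h.abs_le _ _)
      _ = Fintype.card ι / Fintype.card ι * S := by
          rw [Finset.sum_const, Finset.card_univ, nsmul_eq_mul]
          ring
      _ ≤ S := mul_le_of_le_one_left h.bound_nonneg (div_self_le_one _)
  rw [← Finset.mul_sum, ← Finset.sum_product', ← Finset.diag_union_offDiag,
    Finset.sum_union (Finset.disjoint_diag_offDiag _), Finset.sum_diag, mul_add]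
  exact add_le_add_left hdiag _

theorem integral_exp_mean_interaction_le (h : IsDegenerateKernel φ μ μ S) (hS : 8 * S ^ 2 < 1) :
    ∫ X : ι → α, exp (1 / Fintype.card ι * ∑ i, ∑ j, φ (X i) (X j)) ∂(Measure.pi fun _ => μ)
      ≤ exp S * (√(1 - 8 * S ^ 2))⁻¹ := by
  have : Nonempty α := μ.nonempty_of_neZero
  have hmean := h.const_mul (1 / Fintype.card ι)
  have hscale : 8 * (Fintype.card ι * (|1 / (Fintype.card ι : ℝ)| * S)) ^ 2 ≤ 8 * S ^ 2 := by
    have hS0 := h.bound_nonneg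
    rw [abs_of_nonneg (by positivity), ← mul_assoc, mul_one_div]
    gcongr
    exact mul_le_of_le_one_left hS0 (div_self_le_one _)
  calc ∫ X : ι → α, exp (1 / Fintype.card ι * ∑ i, ∑ j, φ (X i) (X j)) ∂(Measure.pi fun _ => μ)
      ≤ ∫ X : ι → α, exp S *
          exp (∑ p ∈ Finset.univ.offDiag, 1 / Fintype.card ι * φ (X p.1) (X p.2))
            ∂(Measure.pi fun _ => μ) := by
        refine integral_mono_of_nonneg (ae_of_all _ fun _ => (exp_pos _).le)
          ((hmean.integrable_exp_sum_prod _).const_mul _) (ae_of_all _ fun X => ?_)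
        simp only [← Real.exp_add]
        exact exp_le_exp.2 (h.mean_interaction_le_add_sum_offDiag X)
    _ ≤ exp S * (√(1 - 8 * S ^ 2))⁻¹ := by
        rw [MeasureTheory.integral_const_mul]
        gcongr
        refine (hmean.integral_exp_sum_offDiag_le (hscale.trans_lt hS)).trans ?_
        exact inv_anti₀ (Real.sqrt_pos.2 (by linarith)) (Real.sqrt_le_sqrt (by linarith))

end IsDegenerateKernel

theorem exp_mul_inv_sqrt_le {S : ℝ} (hS : 8 * S ^ 2 < 1) :
    exp S * (√(1 - 8 * S ^ 2))⁻¹ ≤ 3 / (1 - 8 * S ^ 2) := by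
  have hpos : 0 < 1 - 8 * S ^ 2 := by linarith
  have hexp : exp S ≤ 3 := (exp_le_exp.2 (by nlinarith)).trans Real.exp_one_lt_three.le
  have hsqrt : 1 - 8 * S ^ 2 ≤ √(1 - 8 * S ^ 2) :=
    (Real.le_sqrt' hpos).2 (by nlinarith [sq_nonneg S])
  rw [div_eq_mul_inv]
  gcongr

section Density

variable {α : Type*} [MeasurableSpace α] {ν : Measure α} {ρ : α → ℝ}

theorem integral_withDensity_ofReal (hρ : AEMeasurable ρ ν) (hρ0 : ∀ x, 0 ≤ ρ x) (f : α → ℝ) :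
    ∫ x, f x ∂ν.withDensity (fun x => ENNReal.ofReal (ρ x)) = ∫ x, ρ x * f x ∂ν := by
  rw [integral_withDensity_eq_integral_toReal_smul₀ hρ.ennreal_ofReal
    (ae_of_all _ fun _ => ENNReal.ofReal_lt_top)]
  simp only [ENNReal.toReal_ofReal (hρ0 _), smul_eq_mul]

theorem isProbabilityMeasure_withDensity_ofReal (hρ0 : ∀ x, 0 ≤ ρ x) (hρ1 : ∫ x, ρ x ∂ν = 1) :
    IsProbabilityMeasure (ν.withDensity fun x => ENNReal.ofReal (ρ x)) := by
  refine ⟨?_⟩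
  rw [withDensity_apply _ MeasurableSet.univ, Measure.restrict_univ,
    ← ofReal_integral_eq_lintegral_ofReal (.of_integral_ne_zero (hρ1 ▸ one_ne_zero))
      (ae_of_all _ hρ0), hρ1, ENNReal.ofReal_one]

theorem pi_withDensity_ofReal {ι : Type*} [Fintype ι] [SigmaFinite ν] (hρ : Integrable ρ ν)
    (hρ0 : ∀ x, 0 ≤ ρ x) :
    Measure.pi (fun _ : ι => ν.withDensity fun x => ENNReal.ofReal (ρ x))
      = (Measure.pi fun _ : ι => ν).withDensity fun X => ENNReal.ofReal (∏ i, ρ (X i)) := by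
  have : IsFiniteMeasure (ν.withDensity fun x => ENNReal.ofReal (ρ x)) :=
    isFiniteMeasure_withDensity_ofReal hρ.2
  refine Measure.pi_eq fun s hs => ?_
  rw [withDensity_apply _ (MeasurableSet.univ_pi hs), Measure.restrict_pi_pi,
    ← ofReal_integral_eq_lintegral_ofReal
      (Integrable.fintype_prod (f := fun _ => ρ) fun i => hρ.restrict)
      (ae_of_all _ fun _ => Finset.prod_nonneg fun _ _ => hρ0 _),
    integral_fintype_prod_eq_prod (fun _ => ρ),
    ENNReal.ofReal_prod_of_nonneg fun i _ => integral_nonneg hρ0]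
  refine Finset.prod_congr rfl fun i _ => ?_
  rw [withDensity_apply _ (hs i), ofReal_integral_eq_lintegral_ofReal hρ.restrict
    (ae_of_all _ hρ0)]

end Density

theorem pi_restrict_cube (N d : ℕ) :
    Measure.pi (fun _ : Fin N => volume.restrict (cube d)) = volume.restrict (cubeN N d) := by
  have hpi : cubeN N d = Set.univ.pi fun _ => cube d := by
    ext X
    simp [cubeN]
  rw [hpi, volume_pi, Measure.restrict_pi_pi]

end JabinWang

theorem jabin_wang_theorem4_general {α ι : Type*} [MeasurableSpace α] [Fintype ι] (ν : Measure α)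
    [SigmaFinite ν] (ρ : α → ℝ) (hρ0 : ∀ x, 0 ≤ ρ x) (hρ1 : ∫ x, ρ x ∂ν = 1)
    (φ : α → α → ℝ) (hφ : Measurable fun p : α × α => φ p.1 p.2)
    (S : ℝ) (hS : ∀ x z, |φ x z| ≤ S) (hγ : 8 * S ^ 2 < 1)
    (hleft : ∀ z, ∫ x, φ x z * ρ x ∂ν = 0) (hright : ∀ x, ∫ z, φ x z * ρ z ∂ν = 0) :
    ∫ X : ι → α, (∏ i, ρ (X i)) * exp (1 / Fintype.card ι * ∑ i, ∑ j, φ (X i) (X j))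
        ∂(Measure.pi fun _ => ν)
      ≤ 3 / (1 - 8 * S ^ 2) := by
  have hρ : Integrable ρ ν := .of_integral_ne_zero (hρ1 ▸ one_ne_zero)
  have hμ := JabinWang.isProbabilityMeasure_withDensity_ofReal hρ0 hρ1
  have hdegenerate : JabinWang.IsDegenerateKernel φ (ν.withDensity fun x => ENNReal.ofReal (ρ x))
      (ν.withDensity fun x => ENNReal.ofReal (ρ x)) S := by
    refine ⟨hφ, hS, fun z => ?_, fun x => ?_⟩ <;>
      rw [JabinWang.integral_withDensity_ofReal hρ.aemeasurable hρ0]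
    · simpa only [mul_comm] using hleft z
    · simpa only [mul_comm] using hright x
  have hbound := hdegenerate.integral_exp_mean_interaction_le (ι := ι) hγ
  rw [JabinWang.pi_withDensity_ofReal hρ hρ0, JabinWang.integral_withDensity_ofReal
    (Integrable.fintype_prod fun _ => hρ).aemeasurable
    fun X => Finset.prod_nonneg fun i _ => hρ0 (X i)] at hbound
  exact hbound.trans (JabinWang.exp_mul_inv_sqrt_le hγ)

/-- Theorem 4 of Jabin–Wang: there is a universal constant `C` such that
for any probability density `ρ̄` and bounded `φ` with `γ = C‖φ‖²_{L^∞} < 1` satisfying the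
two cancellation conditions, `∫ ρ̄_N exp((1/N) Σ_{i,j} φ(xᵢ,xⱼ)) ≤ 3/(1−γ)`. Here `S` is the
(essential) sup-norm of `φ`. -/
theorem jabin_wang_theorem4 :
    ∃ C : ℝ, 0 < C ∧ ∀ (d N : ℕ), 1 ≤ d → 1 ≤ N →
      ∀ ρb : Euc d → ℝ, Measurable ρb → (∀ x, 0 ≤ ρb x) → ZPer ρb →
        (∫ x in cube d, ρb x) = 1 →
      ∀ φ : Euc d → Euc d → ℝ, Measurable (fun p : Euc d × Euc d => φ p.1 p.2) →
      ∀ S : ℝ, 0 ≤ S → (∀ x z, |φ x z| ≤ S) → C * S ^ 2 < 1 →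
        (∀ z, (∫ x in cube d, φ x z * ρb x) = 0) →
        (∀ x, (∫ z in cube d, φ x z * ρb z) = 0) →
        (∫ X in cubeN N d, tensorN ρb X *
            Real.exp ((1 / (N:ℝ)) * ∑ i, ∑ j, φ (X i) (X j)))
          ≤ 3 / (1 - C * S ^ 2) := by
  refine ⟨8, by norm_num, fun d N _ _ ρ _ hρ0 _ hρ1 φ hφ S _ hS hγ hleft hright => ?_⟩
  have hbound := jabin_wang_theorem4_general (ι := Fin N) _ ρ hρ0 hρ1 φ hφ S hS hγ hleft hright
  rwa [JabinWang.pi_restrict_cube, Fintype.card_fin] at hbound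
end
end
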